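/- arXiv:1712.04013 — 2 statements merged into one kernel-verified Lean document; each statement's English description precedes it below -/
import Mathlib

section
/- Let X be a measurable space and Q a weighted evolution operator on X satisfying the minorization condition with constant ε ∈ (0,1) and probability measure η. Then for all probability measures μ and ν on X and all n ∈ ℕ, ‖Φ_n(μ) − Φ_n(ν)‖_TV ≤ 2(1 − ε²)ⁿ. -/
open MeasureTheory ProbabilityTheory

/-- The action of a weighted evolution operator given by a kernel `κ`:
`(Qφ)(q) = ∫ φ(q') κ(q, dq')`. -/
noncomputable def evolOp {X : Type*} [MeasurableSpace X] (κ : Kernel X X) (φ : X → ℝ) : X → ℝ :=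
  fun q => ∫ q', φ q' ∂(κ q)

/-- Bounded measurable real-valued functions. -/
def BddMeas {X : Type*} [MeasurableSpace X] (φ : X → ℝ) : Prop :=
  Measurable φ ∧ ∃ C : ℝ, ∀ x, |φ x| ≤ C

/-- Minorization condition: `ε η(φ) ≤ (Qφ)(q) ≤ ε⁻¹ η(φ)` for all bounded measurable `φ ≥ 0`. -/
def Minorizes {X : Type*} [MeasurableSpace X] (Q : (X → ℝ) → (X → ℝ)) (ε : ℝ)
    (η : Measure X) : Prop :=
  ∀ φ : X → ℝ, BddMeas φ → (∀ x, 0 ≤ φ x) → ∀ q,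
    ε * ∫ x, φ x ∂η ≤ Q φ q ∧ Q φ q ≤ ε⁻¹ * ∫ x, φ x ∂η

/-- The discretized Feynman–Kac semigroup `Φ_n(μ)(φ) = μ(Qⁿφ)/μ(Qⁿ1)`. -/
noncomputable def FK {X : Type*} [MeasurableSpace X] (κ : Kernel X X) (μ : Measure X)
    (n : ℕ) (φ : X → ℝ) : ℝ :=
  (∫ q, (evolOp κ)^[n] φ q ∂μ) / (∫ q, (evolOp κ)^[n] (fun _ => (1:ℝ)) q ∂μ)

/-!
If `a h ≤ f`, then `f - a h` is nonnegative. The minorization condition compares `Q` with `η` up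
to a factor `ε` on each side, so `Q (f - a h) ≥ ε² (m - a) Q h` with `m = η(f) / η(h)`. Applied to
`-f` and `-b`, the same bound shows that `f ≤ b h` implies `Q (b h - f) ≥ ε² (b - m) Q h`. Hence
the ratio `Q f / Q h` lies in an interval shorter than `[a, b]` by the factor `1 - ε²`, whatever
`m` is. Iterating from `h = 1` traps `Qⁿ φ / Qⁿ 1` in an interval contracted `n` times; it also
contains `Φ_n(μ)(φ)` and `Φ_n(ν)(φ)`, which are weighted averages of this ratio.
-/

section Integral

variable {X : Type*} [MeasurableSpace X] {μ : Measure X} {f g : X → ℝ} {a b : ℝ}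

theorem integral_pos_of_forall_pos [NeZero μ] (hf : Integrable f μ) (hpos : ∀ x, 0 < f x) :
    0 < ∫ x, f x ∂μ := by
  have hsupp : Function.support f = Set.univ := Set.eq_univ_of_forall fun x => (hpos x).ne'
  rw [integral_pos_iff_support_of_nonneg (fun x => (hpos x).le) hf, hsupp]
  exact NeZero.pos (μ Set.univ)

theorem integral_div_integral_mem_Icc (hf : Integrable f μ) (hg : Integrable g μ)
    (hg_pos : 0 < ∫ x, g x ∂μ) (hfg : f ∈ Set.Icc (a • g) (b • g)) :
    (∫ x, f x ∂μ) / ∫ x, g x ∂μ ∈ Set.Icc a b := by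
  rw [Set.mem_Icc, le_div_iff₀ hg_pos, div_le_iff₀ hg_pos, ← integral_const_mul,
    ← integral_const_mul]
  exact ⟨integral_mono (hg.const_mul a) hf hfg.1, integral_mono hf (hg.const_mul b) hfg.2⟩

end Integral

namespace BddMeas

variable {X : Type*} [MeasurableSpace X] {f g : X → ℝ}

theorem of_mem_Icc {a b : ℝ} (hf : Measurable f) (hab : ∀ x, f x ∈ Set.Icc a b) : BddMeas f :=
  ⟨hf, max |a| |b|, fun x => abs_le_max_abs_abs (hab x).1 (hab x).2⟩

theorem const (c : ℝ) : BddMeas fun _ : X => c :=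
  ⟨measurable_const, |c|, fun _ => le_rfl⟩

theorem const_smul (hf : BddMeas f) (c : ℝ) : BddMeas (c • f) := by
  obtain ⟨hmeas, C, hC⟩ := hf
  refine ⟨hmeas.const_smul c, |c| * C, fun x => ?_⟩
  rw [Pi.smul_apply, smul_eq_mul, abs_mul]
  exact mul_le_mul_of_nonneg_left (hC x) (abs_nonneg c)

protected theorem neg (hf : BddMeas f) : BddMeas (-f) := by
  obtain ⟨hmeas, C, hC⟩ := hf
  exact ⟨hmeas.neg, C, fun x => (abs_neg (f x)).trans_le (hC x)⟩

protected theorem sub (hf : BddMeas f) (hg : BddMeas g) : BddMeas (f - g) := by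
  obtain ⟨hf_meas, C, hC⟩ := hf
  obtain ⟨hg_meas, D, hD⟩ := hg
  exact ⟨hf_meas.sub hg_meas, C + D, fun x => (abs_sub _ _).trans (add_le_add (hC x) (hD x))⟩

theorem integrable (hf : BddMeas f) (μ : Measure X) [IsFiniteMeasure μ] : Integrable f μ := by
  obtain ⟨hmeas, C, hC⟩ := hf
  exact .of_bound hmeas.aestronglyMeasurable C (.of_forall hC)

variable {κ : Kernel X X} [IsFiniteKernel κ]

protected theorem evolOp (hf : BddMeas f) : BddMeas (evolOp κ f) := by
  obtain ⟨hmeas, C, hC⟩ := hf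
  refine ⟨hmeas.stronglyMeasurable.integral_kernel.measurable, C * κ.bound.toReal, fun q => ?_⟩
  have hC_nonneg : 0 ≤ C := (abs_nonneg _).trans (hC q)
  have hmass : (κ q).real Set.univ ≤ κ.bound.toReal :=
    ENNReal.toReal_mono κ.bound_ne_top (κ.measure_le_bound q Set.univ)
  exact (norm_integral_le_of_norm_le_const (f := f) (.of_forall hC)).trans
    (mul_le_mul_of_nonneg_left hmass hC_nonneg)

theorem evolOp_iterate (hf : BddMeas f) (n : ℕ) : BddMeas ((evolOp κ)^[n] f) :=
  Function.Iterate.rec BddMeas hf (fun _ => BddMeas.evolOp) n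

theorem evolOp_sub (hf : BddMeas f) (hg : BddMeas g) :
    evolOp κ (f - g) = evolOp κ f - evolOp κ g :=
  funext fun q => integral_sub (hf.integrable (κ q)) (hg.integrable (κ q))

end BddMeas

theorem evolOp_const_smul {X : Type*} [MeasurableSpace X] (κ : Kernel X X) (c : ℝ) (f : X → ℝ) :
    evolOp κ (c • f) = c • evolOp κ f :=
  funext fun _ => integral_smul c f

theorem evolOp_neg {X : Type*} [MeasurableSpace X] (κ : Kernel X X) (f : X → ℝ) :
    evolOp κ (-f) = -evolOp κ f :=
  funext fun _ => integral_neg' f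

namespace Minorizes

variable {X : Type*} [MeasurableSpace X] {ε : ℝ} {η : Measure X}

section Operator

variable {Q : (X → ℝ) → X → ℝ} {φ h : X → ℝ}

theorem sq_mul_integral_div_mul_le (hQ : Minorizes Q ε η) (hε : 0 < ε) (hφ : BddMeas φ)
    (hφ_nonneg : 0 ≤ φ) (hh : BddMeas h) (hh_nonneg : 0 ≤ h) (q : X) :
    ε ^ 2 * ((∫ x, φ x ∂η) / ∫ x, h x ∂η) * Q h q ≤ Q φ q := by
  have hφ_int : 0 ≤ ∫ x, φ x ∂η := integral_nonneg hφ_nonneg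
  have hh_int : 0 ≤ ∫ x, h x ∂η := integral_nonneg hh_nonneg
  calc ε ^ 2 * ((∫ x, φ x ∂η) / ∫ x, h x ∂η) * Q h q
      ≤ ε ^ 2 * ((∫ x, φ x ∂η) / ∫ x, h x ∂η) * (ε⁻¹ * ∫ x, h x ∂η) := by
        gcongr
        exact (hQ h hh hh_nonneg q).2
    _ = ε * ((∫ x, φ x ∂η) / (∫ x, h x ∂η) * ∫ x, h x ∂η) := by field_simp
    _ ≤ ε * ∫ x, φ x ∂η := by
        gcongr
        exact mul_le_of_le_div₀ hφ_int hh_int le_rfl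
    _ ≤ Q φ q := (hQ φ hφ hφ_nonneg q).1

theorem pos [IsFiniteMeasure η] [NeZero η] (hQ : Minorizes Q ε η) (hε : 0 < ε)
    (hφ : BddMeas φ) (hφ_pos : ∀ x, 0 < φ x) (q : X) : 0 < Q φ q :=
  (mul_pos hε (integral_pos_of_forall_pos (hφ.integrable η) hφ_pos)).trans_le
    (hQ φ hφ (fun x => (hφ_pos x).le) q).1

end Operator

variable [IsFiniteMeasure η] [NeZero η] {κ : Kernel X X} [IsFiniteKernel κ] {f h : X → ℝ} {a b : ℝ}

theorem evolOp_iterate_pos (hmin : Minorizes (evolOp κ) ε η) (hε : 0 < ε) (hh : BddMeas h)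
    (hh_pos : ∀ x, 0 < h x) (n : ℕ) : ∀ x, 0 < (evolOp κ)^[n] h x := by
  induction n with
  | zero => exact hh_pos
  | succ n ih =>
    rw [Function.iterate_succ_apply']
    exact hmin.pos hε (hh.evolOp_iterate n) ih

theorem smul_evolOp_le (hmin : Minorizes (evolOp κ) ε η) (hε : 0 < ε) (hf : BddMeas f)
    (hh : BddMeas h) (hh_pos : ∀ x, 0 < h x) (hfh : a • h ≤ f) :
    (a + ε ^ 2 * ((∫ x, f x ∂η) / (∫ x, h x ∂η) - a)) • evolOp κ h ≤ evolOp κ f := by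
  intro q
  have hh_int : ∫ x, h x ∂η ≠ 0 := (integral_pos_of_forall_pos (hh.integrable η) hh_pos).ne'
  have ratio_sub : (∫ x, (f - a • h) x ∂η) / ∫ x, h x ∂η
      = (∫ x, f x ∂η) / (∫ x, h x ∂η) - a := by
    have ha := hh.const_smul a
    simp only [integral_sub' (hf.integrable η) (ha.integrable η), Pi.smul_apply, smul_eq_mul,
      integral_const_mul, sub_div, mul_div_cancel_right₀ a hh_int]
  have gain := hmin.sq_mul_integral_div_mul_le hε (hf.sub (hh.const_smul a))
    (sub_nonneg.2 hfh) hh (fun x => (hh_pos x).le) q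
  rw [ratio_sub, hf.evolOp_sub (hh.const_smul a), evolOp_const_smul] at gain
  simp only [Pi.sub_apply, Pi.smul_apply, smul_eq_mul] at gain ⊢
  linarith

theorem exists_evolOp_mem_Icc_smul (hmin : Minorizes (evolOp κ) ε η) (hε : 0 < ε)
    (hf : BddMeas f) (hh : BddMeas h) (hh_pos : ∀ x, 0 < h x)
    (hfh : f ∈ Set.Icc (a • h) (b • h)) :
    ∃ a' b' : ℝ, b' - a' = (1 - ε ^ 2) * (b - a) ∧
      evolOp κ f ∈ Set.Icc (a' • evolOp κ h) (b' • evolOp κ h) := by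
  set m := (∫ x, f x ∂η) / ∫ x, h x ∂η with hm
  refine ⟨a + ε ^ 2 * (m - a), b - ε ^ 2 * (b - m), by ring,
    hmin.smul_evolOp_le hε hf hh hh_pos hfh.1, ?_⟩
  have neg_le : (-b) • h ≤ -f := by
    rw [neg_smul]
    exact neg_le_neg hfh.2
  have upper := hmin.smul_evolOp_le hε hf.neg hh hh_pos neg_le
  rw [integral_neg', neg_div, ← hm, evolOp_neg] at upper
  have neg_endpoint : -(b - ε ^ 2 * (b - m)) = -b + ε ^ 2 * (-m - -b) := by ring
  rwa [← neg_le_neg_iff, ← neg_smul, neg_endpoint]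

theorem exists_evolOp_iterate_mem_Icc_smul (hmin : Minorizes (evolOp κ) ε η) (hε : 0 < ε)
    (hf : BddMeas f) (hh : BddMeas h) (hh_pos : ∀ x, 0 < h x)
    (hfh : f ∈ Set.Icc (a • h) (b • h)) (n : ℕ) :
    ∃ a' b' : ℝ, b' - a' = (1 - ε ^ 2) ^ n * (b - a) ∧
      (evolOp κ)^[n] f ∈ Set.Icc (a' • (evolOp κ)^[n] h) (b' • (evolOp κ)^[n] h) := by
  induction n with
  | zero => exact ⟨a, b, by rw [pow_zero, one_mul], hfh⟩
  | succ n ih =>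
    obtain ⟨a', b', hlen, hmem⟩ := ih
    obtain ⟨a'', b'', hlen', hmem'⟩ := hmin.exists_evolOp_mem_Icc_smul hε (hf.evolOp_iterate n)
      (hh.evolOp_iterate n) (hmin.evolOp_iterate_pos hε hh hh_pos n) hmem
    refine ⟨a'', b'', by rw [hlen', hlen]; ring, ?_⟩
    simpa only [Function.iterate_succ_apply'] using hmem'

end Minorizes

theorem feynman_kac_TV_contraction_general
    {X : Type*} [MeasurableSpace X] (κ : Kernel X X) [IsFiniteKernel κ]
    {ε : ℝ} (hε : 0 < ε) {η : Measure X} [IsFiniteMeasure η] [NeZero η]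
    (hmin : Minorizes (evolOp κ) ε η)
    (μ ν : Measure X) [IsFiniteMeasure μ] [NeZero μ] [IsFiniteMeasure ν] [NeZero ν]
    (n : ℕ) {φ : X → ℝ} (hφ : Measurable φ) {a b : ℝ} (hab : ∀ x, φ x ∈ Set.Icc a b) :
    |FK κ μ n φ - FK κ ν n φ| ≤ (1 - ε ^ 2) ^ n * (b - a) := by
  have hφ_bdd : BddMeas φ := .of_mem_Icc hφ hab
  have one_bdd : BddMeas fun _ : X => (1 : ℝ) := .const 1
  have hφ_mem : φ ∈ Set.Icc (a • fun _ => (1 : ℝ)) (b • fun _ => (1 : ℝ)) :=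
    ⟨fun x => by simpa using (hab x).1, fun x => by simpa using (hab x).2⟩
  obtain ⟨a', b', hlen, hmem⟩ := hmin.exists_evolOp_iterate_mem_Icc_smul hε hφ_bdd one_bdd
    (fun _ => one_pos) hφ_mem n
  have FK_mem (ρ : Measure X) [IsFiniteMeasure ρ] [NeZero ρ] : FK κ ρ n φ ∈ Set.Icc a' b' :=
    have one_int := (one_bdd.evolOp_iterate (κ := κ) n).integrable ρ
    integral_div_integral_mem_Icc ((hφ_bdd.evolOp_iterate n).integrable ρ) one_int
      (integral_pos_of_forall_pos one_int
        (hmin.evolOp_iterate_pos hε one_bdd (fun _ => one_pos) n)) hmem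
  exact (Real.dist_le_of_mem_Icc (FK_mem μ) (FK_mem ν)).trans_eq hlen

/-- Contraction of the discretized Feynman–Kac semigroup in total variation:
for any two initial probability measures μ and ν,
`‖Φ_n(μ) − Φ_n(ν)‖_TV ≤ 2(1−ε²)ⁿ`. -/
theorem feynman_kac_TV_contraction
    {X : Type*} [MeasurableSpace X] (κ : Kernel X X) [IsFiniteKernel κ]
    (ε : ℝ) (hε : ε ∈ Set.Ioo (0:ℝ) 1) (η : Measure X) [IsProbabilityMeasure η]
    (hmin : Minorizes (evolOp κ) ε η)
    (μ ν : Measure X) [IsProbabilityMeasure μ] [IsProbabilityMeasure ν]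
    (n : ℕ) (A : Set X) (hA : MeasurableSet A) :
    |FK κ μ n (A.indicator fun _ => (1:ℝ)) - FK κ ν n (A.indicator fun _ => (1:ℝ))|
      ≤ 2 * (1 - ε ^ 2) ^ n := by
  have hA_mem (x : X) : A.indicator (fun _ => (1 : ℝ)) x ∈ Set.Icc 0 1 :=
    ⟨Set.indicator_nonneg (fun _ _ => zero_le_one) x,
      Set.indicator_le_self' (fun _ _ => zero_le_one) x⟩
  have hcontr := feynman_kac_TV_contraction_general κ hε.1 hmin μ ν n
    (measurable_const.indicator hA) hA_mem
  linarith [abs_nonneg (FK κ μ n (A.indicator fun _ => 1) - FK κ ν n (A.indicator fun _ => 1))]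
end

section
/- Let X be a measurable space and Q a weighted evolution operator on X satisfying the minorization condition with constant ε ∈ (0,1) and probability measure η. Let g : X → ℝ be bounded measurable with g ≥ 0 and η(g) > 0 (so that Qg ≥ ε η(g) > 0 pointwise), and define the Markov transition kernel S by S(q, A) = Q(g·1_A)(q) / (Qg)(q) for q ∈ X and measurable A ⊂ X. Then the Dobrushin ergodic coefficient of S satisfies α(S) ≥ ε². -/
open MeasureTheory ProbabilityTheory

/-!
Everything rests on a Doeblin minorization that does not depend on the starting point. The lower
bound applied to `φ` and the upper bound applied to `g` give
`(Qφ)(q) / (Qg)(q) ≥ (ε η(φ)) / (ε⁻¹ η(g)) = ε² η(φ) / η(g)`, so with `φ = g 1_A` every `S(q, ·)`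
dominates `ε² ν`, where `ν(A) = η(g 1_A) / η(g)` is a probability measure. Hence
`min (S(q, A)) (S(q', A)) ≥ ε² ν(A)`, and over a finite cover the values `ν(A)` add up to at
least one.
-/

section

variable {X : Type*} [MeasurableSpace X]

theorem BddMeas.integrable_s3 {f : X → ℝ} (hf : BddMeas f) (μ : Measure X) [IsFiniteMeasure μ] :
    Integrable f μ := by
  obtain ⟨hmeas, C, hC⟩ := hf
  exact .of_bound hmeas.aestronglyMeasurable C (.of_forall hC)

theorem BddMeas.indicator {f : X → ℝ} (hf : BddMeas f) {s : Set X} (hs : MeasurableSet s) :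
    BddMeas (s.indicator f) := by
  obtain ⟨hmeas, C, hC⟩ := hf
  exact ⟨hmeas.indicator hs, C, fun x => (norm_indicator_le_norm_self f x).trans (hC x)⟩

theorem setIntegral_iUnion_le_sum {ι E : Type*} [Fintype ι] [NormedAddCommGroup E]
    [NormedSpace ℝ E] [PartialOrder E] [IsOrderedAddMonoid E] [IsOrderedModule ℝ E]
    [OrderClosedTopology E] {μ : Measure X} {f : X → E} {s : ι → Set X}
    (hf : 0 ≤ᵐ[μ] f) (hfi : ∀ i, IntegrableOn f (s i) μ) :
    ∫ x in ⋃ i, s i, f x ∂μ ≤ ∑ i, ∫ x in s i, f x ∂μ := by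
  have hle : μ.restrict (⋃ i, s i) ≤ ∑ i, μ.restrict (s i) :=
    Measure.restrict_iUnion_le.trans_eq (Measure.sum_fintype _)
  have hnonneg : 0 ≤ᵐ[∑ i, μ.restrict (s i)] f := by
    rw [← Measure.sum_fintype]
    exact Measure.ae_sum_iff.2 fun i => ae_restrict_of_ae hf
  calc ∫ x in ⋃ i, s i, f x ∂μ
      ≤ ∫ x, f x ∂(∑ i, μ.restrict (s i)) :=
        integral_mono_measure hle hnonneg (integrable_finsetSum_measure.2 fun i _ => hfi i)
    _ = ∑ i, ∫ x in s i, f x ∂μ := integral_finsetSum_measure fun i _ => hfi i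

namespace Minorizes

variable {Q : (X → ℝ) → (X → ℝ)} {ε : ℝ} {η : Measure X}

theorem apply_pos (hQ : Minorizes Q ε η) (hε : 0 < ε) {g : X → ℝ} (hg : BddMeas g)
    (hg0 : ∀ x, 0 ≤ g x) (hgη : 0 < ∫ x, g x ∂η) (q : X) : 0 < Q g q :=
  (mul_pos hε hgη).trans_le (hQ g hg hg0 q).1

theorem sq_mul_integral_div_le_apply_div (hQ : Minorizes Q ε η) (hε : 0 < ε) {φ g : X → ℝ}
    (hφ : BddMeas φ) (hφ0 : ∀ x, 0 ≤ φ x) (hg : BddMeas g) (hg0 : ∀ x, 0 ≤ g x)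
    (hgη : 0 < ∫ x, g x ∂η) (q : X) :
    ε ^ 2 * ((∫ x, φ x ∂η) / ∫ x, g x ∂η) ≤ Q φ q / Q g q := by
  have hlower : ε * ∫ x, φ x ∂η ≤ Q φ q := (hQ φ hφ hφ0 q).1
  have hupper : Q g q ≤ ε⁻¹ * ∫ x, g x ∂η := (hQ g hg hg0 q).2
  have hQφ : 0 ≤ Q φ q := (mul_nonneg hε.le (integral_nonneg hφ0)).trans hlower
  calc ε ^ 2 * ((∫ x, φ x ∂η) / ∫ x, g x ∂η)
      = (ε * ∫ x, φ x ∂η) / (ε⁻¹ * ∫ x, g x ∂η) := by field_simp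
    _ ≤ Q φ q / Q g q := div_le_div₀ hQφ hlower (hQ.apply_pos hε hg hg0 hgη q) hupper

end Minorizes

theorem dobrushin_coefficient_lower_bound_general {Q : (X → ℝ) → (X → ℝ)} {ε : ℝ} (hε : 0 < ε)
    {η : Measure X} [IsFiniteMeasure η] (hQ : Minorizes Q ε η)
    {g : X → ℝ} (hg : BddMeas g) (hg0 : ∀ x, 0 ≤ g x) (hgη : 0 < ∫ x, g x ∂η) (q q' : X)
    {ι : Type*} [Fintype ι] {A : ι → Set X} (hAmeas : ∀ i, MeasurableSet (A i))
    (hAcover : (⋃ i, A i) = Set.univ) :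
    ε ^ 2 ≤ ∑ i, min (Q ((A i).indicator g) q / Q g q) (Q ((A i).indicator g) q' / Q g q') := by
  have hmass : ∫ x, g x ∂η ≤ ∑ i, ∫ x, (A i).indicator g x ∂η := by
    simp_rw [integral_indicator (hAmeas _)]
    rw [← setIntegral_univ, ← hAcover]
    exact setIntegral_iUnion_le_sum (.of_forall hg0) fun i => (hg.integrable_s3 η).integrableOn
  have hdoeblin (i : ι) (p : X) : ε ^ 2 * ((∫ x, (A i).indicator g x ∂η) / ∫ x, g x ∂η) ≤
      Q ((A i).indicator g) p / Q g p :=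
    hQ.sq_mul_integral_div_le_apply_div hε (hg.indicator (hAmeas i))
      (Set.indicator_nonneg fun x _ => hg0 x) hg hg0 hgη p
  calc ε ^ 2
      ≤ ε ^ 2 * ((∑ i, ∫ x, (A i).indicator g x ∂η) / ∫ x, g x ∂η) :=
        le_mul_of_one_le_right (sq_nonneg ε) ((one_le_div hgη).2 hmass)
    _ = ∑ i, ε ^ 2 * ((∫ x, (A i).indicator g x ∂η) / ∫ x, g x ∂η) := by
        rw [Finset.sum_div, Finset.mul_sum]
    _ ≤ ∑ i, min (Q ((A i).indicator g) q / Q g q) (Q ((A i).indicator g) q' / Q g q') :=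
        Finset.sum_le_sum fun i _ => le_min (hdoeblin i q) (hdoeblin i q')

end

/-- Lower bound on the Dobrushin ergodic coefficient of the resampled Markov kernel
`S(q,A) = Q(g·1_A)(q)/(Qg)(q)`: for every pair of points and every finite measurable
partition, the Dobrushin sum is at least `ε²`; that is, `α(S) ≥ ε²`. -/
theorem dobrushin_coefficient_lower_bound
    {X : Type*} [MeasurableSpace X] (κ : Kernel X X) [IsFiniteKernel κ]
    (ε : ℝ) (hε : ε ∈ Set.Ioo (0:ℝ) 1) (η : Measure X) [IsProbabilityMeasure η]
    (hmin : Minorizes (evolOp κ) ε η)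
    (g : X → ℝ) (hg : BddMeas g) (hg0 : ∀ x, 0 ≤ g x) (hgη : 0 < ∫ x, g x ∂η)
    (q q' : X) (m : ℕ) (A : Fin m → Set X) (hAmeas : ∀ i, MeasurableSet (A i))
    (hAdisj : Pairwise (Function.onFun Disjoint A)) (hAcover : (⋃ i, A i) = Set.univ) :
    ε ^ 2 ≤ ∑ i : Fin m,
      min (evolOp κ ((A i).indicator g) q / evolOp κ g q)
          (evolOp κ ((A i).indicator g) q' / evolOp κ g q') := by
  exact dobrushin_coefficient_lower_bound_general hε.1 hmin hg hg0 hgη q q' hAmeas hAcover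
end
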